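/- arXiv:2405.10836 — 6 statements merged into one kernel-verified Lean document; each statement's English description precedes it below -/
import Mathlib

section
/- Let A be a real number with A ≥ Ψ. Then for every k ∈ (0,1) there is no real number l such that ω(A,k,l) = 0 and P_Y(A,k,l) = 0. -/
/-!
Write `X = A l²`. The equations `ω = 0` and `P_Y = 0` are linear in `(X, l)`. In both Cramer
eliminants the factor `(1 - k) G` splits off, where `G` is the quadratic `commonFactor`, positive
on the relevant range. After cancelling it, with
`R = 2(d₁ + d₂k)² + 2k(d₁ + d₂k) - d₂k²` and `S = 4(d₁-1)(d₁ + d₂k)² + d₂²k²`,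
a common zero satisfies
* `(d₂-1) S l = 2 d₁(d₁-1) R` (`eliminate_X`),
* `S X = d₂(d₁-1) k (4d₁ + 3d₂k)` (`eliminate_l`).

Inserting both into `A l² = X` forces
`4 d₁²(d₁-1) R² A = d₂(d₂-1)² k (4d₁ + 3d₂k) S`. Put `u = d₁/k + d₂`, so `u > n = d₁ + d₂`. Then
`A = C f(u)` with a positive constant `C` and
`f(u) = (4u - d₂)(4(d₁-1)u² + d₂²) / (2u² + 2u - d₂)²`, while `Ψ = C f(n)`. The function `f` is
strictly smaller at `u` than at `n`: it is the product of `(4(d₁-1)u² + d₂²)/u²`, which is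
antitone, and `u²(4u - d₂)/(2u² + 2u - d₂)²`, which drops strictly past `n` (`profile_lt`).
Hence `A < Ψ`.
-/

noncomputable section

namespace PaperDefs

/-- The polynomial `P_X`. -/
def PX (d1 d2 k : ℝ) : ℝ :=
  ((d2*(d1*d2 - 2*d1 - d2 + 1)*k^2 + 2*(d2-1)*(d1-1)*d1*k + d1^2*(d1-1))*(1-k))/(d1*(d1+d2-1))

/-- The polynomial `Q_X`. -/
def QX (d1 d2 k : ℝ) : ℝ :=
  4*k*(1 + d2*k/(2*d1))*(d1 + d2*k + d2*k/(2*d1)) +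
    (2 + 2*k + 3*d2*k/d1)*(d1 + d2*k^2 - (d1 + d2*k)^2)/(d1+d2-1)

/-- The coefficient `ω₂`. -/
def omega2 (d1 d2 k : ℝ) : ℝ :=
  (2*d1^2*d2^2 - d1*d2^3 + d2^3 - d2^2)*k^3
    + (4*d1^3*d2 - 4*d1^2*d2^2 - 2*d1^2*d2 + 4*d1*d2^2 - 2*d1*d2)*k^2
    + (2*d1^4 - 5*d1^3*d2 - 2*d1^3 + 5*d1^2*d2)*k - 2*d1^4 + 2*d1^3

/-- The coefficient `ω₁`. -/
def omega1 (d1 d2 k : ℝ) : ℝ :=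
  (d1*d2^3 - 4*d1*d2^2 - d2^3 + 3*d2^2)*k^3
    + (2*d1^2*d2^2 - 8*d1^2*d2 + 8*d1*d2 - 2*d2^2)*k^2
    + (d1^3*d2 - 4*d1^3 + 5*d1^2*d2 + 4*d1^2 - 6*d1*d2)*k + 4*d1^3 - 4*d1^2

/-- The coefficient `ω₀`. -/
def omega0 (d1 d2 k : ℝ) : ℝ :=
  (d1*d2^3 - 2*d1*d2^2 - d2^3 - 2*d1*d2 + d2^2)*k^2
    + (2*d1^2*d2^2 - 2*d1^2*d2 - 2*d1*d2^2 - 4*d1^2 + 4*d1*d2)*k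
    + d1^3*d2 - d1^2*d2 + 4*d1^2

/-- The function `ω(A,k,l)`. -/
def omega (d1 d2 A k l : ℝ) : ℝ :=
  (1/(d1^2*(d1+d2-1))) * (((2*d1 + d2*k)/d2)*omega2 d1 d2 k*A*l^2
    + (d2-1)*k*omega1 d1 d2 k*l - (d1-1)*k^2*omega0 d1 d2 k)

/-- The function `P_Y(A,k,l)`. -/
def PY (d1 d2 A k l : ℝ) : ℝ :=
  -((d1*((d1+d2)+d1-2) + d2*((d1+d2)+d1-1)*k)/(d2*((d1+d2)-1)))*A*l^2
    + ((d2-1)*(d1 + d2*k - 1)/((d1+d2)-1))*l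
    - ((d1-1)*(d1 + d2*k - k)/((d1+d2)-1))

/-- The function `ν₁(A,k)`. -/
def nu1 (d1 d2 A k : ℝ) : ℝ := d2*(d2-1)*k/(d1*A*(2*d1 + d2*k))

/-- The constant `Ψ`. -/
def Psi (d1 d2 : ℝ) : ℝ :=
  ((4*(d1-1)*(d1+d2)^2 + d2^2)*(3*(d1+d2) + d1)/((2*(d1+d2)^2 + (d1+d2) + d1)^2*d1^2))
    *(d2*(d2-1)^2/(4*(d1-1)))

/-- The function `ζ(A,k,l)`. -/
def zeta (d1 d2 A k l : ℝ) : ℝ :=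
  (-((d1 + d2*k)*(d1 + d2*k - 1)*(2*d1 + d2*k))/d2)*A*l^2
    + (((d2-1)/d1)*(d1 + d2*k)*(d2*k^2 + d2*(d1-1)*k + d1*(d1-1))
       - ((1-k)/d1)*((d1*d2^2 - 2*d1*d2 - d2^2 + d2)*k^2
          + (2*d1^2*d2 - 2*d1^2 - 2*d1*d2 + 2*d1)*k + d1^2*(d1-1))
         *(d2 - 1 - 2*d1^2*(d1+1)*A/(d2*(d2-1))))*l
    + (-(k*(d1-1)*(d1 + d2*k)*(d1 + d2*k + 1 - 2*k)))

/-- The polynomial `β₀`. -/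
def beta0 (d1 d2 k : ℝ) : ℝ :=
  (d1*d2^2 - 2*d1*d2 - d2^2 + d2)*k^2 + (2*d1^2*d2 - 2*d1^2 - d1*d2 + 2*d1)*k + d1^3 - d1

/-- The polynomial `β₁`. -/
def beta1 (d1 d2 k : ℝ) : ℝ :=
  (2*d1^2*d2^2 + d1*d2^3 - 4*d1^2*d2 - 2*d1*d2^2 - d2^3 - 2*d1*d2 + 2*d2)*k^2
    + (4*d1^3*d2 + 2*d1^2*d2^2 - 4*d1^3 - 2*d1^2*d2 - 3*d1*d2^2 + 4*d1*d2 + d2^2 + 4*d1 - 2*d2)*k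
    + 2*d1^4 + d1^3*d2 - 2*d1^2*d2 + 2*d1^2 + d1*d2 - 4*d1

/-- The polynomial `β₂`. -/
def beta2 (d1 d2 k : ℝ) : ℝ :=
  (d1*d2^3 - 2*d1*d2^2 - d2^3 + d2^2)*k^3
    + (2*d1^2*d2^2 - 4*d1^2*d2 - 2*d1*d2^2 + 2*d1*d2)*k^2
    + (d1^3*d2 - 2*d1^3 + d1^2*d2)*k + 2*d1^3

/-- The polynomial `ρ₁`. -/
def rho1 (d1 d2 k : ℝ) : ℝ :=
  4*d1^2*(d1-1)*(2*d2^2*k^2 + d2*k^2 + 4*d1*d2*k + 2*d1*k + 2*d1^2)^2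

/-- The polynomial `ρ₀`. -/
def rho0 (d1 d2 k : ℝ) : ℝ :=
  (d2-1)^2*k*d2*(4*d1 + 3*d2*k)*(4*(d1-1)*(d1 + d2*k)^2 + d2^2*k^2)

/-- The function `Ω`. -/
def OmegaFun (d1 d2 k : ℝ) : ℝ :=
  -(omega1 d1 d2 k^2*d2*(d2-1)^2)/(4*(d1-1)*(2*d1 + d2*k)*omega0 d1 d2 k*omega2 d1 d2 k)

/-- The polynomial `α₄`. -/
def alpha4 (d1 d2 k : ℝ) : ℝ :=
  (-d1^3*d2^3 + d1^2*d2^4 + 4*d1^3*d2^2 - 2*d1^2*d2^3 - 2*d1*d2^4 - d1^2*d2^2 + 4*d1*d2^3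
      + d2^4 - d1*d2^2 - d2^3)*k^3
    + (-2*d1^4*d2^2 + 4*d1^3*d2^3 + 8*d1^4*d2 - 8*d1^3*d2^2 - 8*d1^2*d2^3 - 8*d1^3*d2
      + 14*d1^2*d2^2 + 4*d1*d2^3 - 4*d1*d2^2)*k^2
    + (-d1^5*d2 + 5*d1^4*d2^2 + 4*d1^5 - 10*d1^4*d2 - 10*d1^3*d2^2 - 8*d1^4 + 17*d1^3*d2
      + 5*d1^2*d2^2 + 4*d1^3 - 6*d1^2*d2)*k
    + 2*d1^5*d2 - 4*d1^5 - 4*d1^4*d2 + 8*d1^4 + 2*d1^3*d2 - 4*d1^3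

/-- The function `ω̃₂`. -/
def omegaTilde2 (d1 d2 κ : ℝ) : ℝ :=
  1 + (d1-1)*(1-κ)*((-2*d1 + d2 - 2)*κ^2 + (2*d1 - 3*d2)*κ + 2*d2)/κ^3

/-- The factor `θ_{2a}`. -/
def theta2a (d1 d2 k : ℝ) : ℝ :=
  (d1*d2^3 - 2*d1*d2^2 - d2^3 - 2*d1*d2 + d2^2)*k^2
    + (2*d1^2*d2^2 - 2*d1^2*d2 - 2*d1*d2^2 - 4*d1^2 + 4*d1*d2)*k
    + d1^3*d2 - d1^2*d2 + 4*d1^2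

/-- The factor `θ_{2b}`. -/
def theta2b (d1 d2 k : ℝ) : ℝ :=
  (2*d1^2*d2^2 - d1*d2^3 + d2^3 - d2^2)*k^3
    + (4*d1^3*d2 - 4*d1^2*d2^2 - 2*d1^2*d2 + 4*d1*d2^2 - 2*d1*d2)*k^2
    + (2*d1^4 - 5*d1^3*d2 - 2*d1^3 + 5*d1^2*d2)*k - 2*d1^4 + 2*d1^3

/-- The factor `θ_{0a}`. -/
def theta0a (d1 d2 k : ℝ) : ℝ :=
  k*d2^2*(d2-1)^4*(2*d1 + d2*k)*((2*d1*d2 - 2*d1 + d2)*k + 2*d1^2 + 2*d1)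

/-- The factor `θ_{0b}`. -/
def theta0b (d1 d2 k : ℝ) : ℝ :=
  (2*d1^2 - 1)*d2^2*k^2 + (4*d1^3 - 2*d1^2 - 2*d1)*d2*k + 2*d1^3*(d1-1)

/-- The coefficient `θ₂`. -/
def theta2 (d1 d2 k : ℝ) : ℝ := 4*d1^4*(d1+1)^2*theta2a d1 d2 k*theta2b d1 d2 k

/-- The coefficient `θ₀`. -/
def theta0 (d1 d2 k : ℝ) : ℝ := theta0a d1 d2 k*theta0b d1 d2 k

/-- The function `F` of Statement 18. -/
def Ffun (d1 d2 k : ℝ) : ℝ :=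
  d2*(d2-1)^2*beta2 d1 d2 k/(d1^2*(2*d1 + d2*k)*omega0 d1 d2 k)

end PaperDefs

open PaperDefs

/-- The quadratic in `k` that divides both eliminants of the system `ω = 0`, `P_Y = 0`. -/
def commonFactor (d1 d2 k : ℝ) : ℝ :=
  d2*(d1*d2 - 2*d1 - d2 + 1)*k^2 + 2*(d2-1)*(d1-1)*d1*k + d1^2*(d1-1)

lemma commonFactor_pos {d1 d2 k : ℝ} (h1 : 2 ≤ d1) (h2 : d1 ≤ d2) (hk0 : 0 < k) (hk1 : k < 1) :
    0 < commonFactor d1 d2 k := by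
  obtain ⟨a, rfl⟩ : ∃ a, d1 = 2 + a := ⟨d1 - 2, by ring⟩
  obtain ⟨b, rfl⟩ : ∃ b, d2 = 2 + a + b := ⟨d2 - (2 + a), by ring⟩
  obtain ⟨t, rfl⟩ : ∃ t, k = 1 - t := ⟨1 - k, by ring⟩
  have ha : 0 ≤ a := by linarith
  have hb : 0 ≤ b := by linarith
  have ht : 0 < t := by linarith
  -- The only negative term is `-d₂k²`, absorbed by the linear term because `k² ≤ k`.
  have key : commonFactor (2 + a) (2 + a + b) (1 - t)
      = (2 + a + b)*((1 + a)*(a + b))*(1 - t)^2 + (2 + a + b)*(1 - t)*t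
        + (2*(1 + a + b)*(1 + a)*(2 + a) - (2 + a + b))*(1 - t)
        + (2 + a)^2*(1 + a) := by
    unfold commonFactor; ring
  have h3 : 0 ≤ 2*(1 + a + b)*(1 + a)*(2 + a) - (2 + a + b) := by
    ring_nf; nlinarith [mul_nonneg ha hb, mul_nonneg ha ha, mul_nonneg (mul_nonneg ha ha) hb,
      mul_nonneg (mul_nonneg ha ha) ha]
  rw [key]
  positivity

/-- Eliminating `X = A l²` from `ω = P_Y = 0` determines `l`. -/
lemma eliminate_X {d1 d2 A k l : ℝ} (h1 : 2 ≤ d1) (h2 : d1 ≤ d2) (hk0 : 0 < k) (hk1 : k < 1)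
    (hw : (2*d1 + d2*k)*omega2 d1 d2 k*(A*l^2) + d2*(d2-1)*k*omega1 d1 d2 k*l
      - d2*(d1-1)*k^2*omega0 d1 d2 k = 0)
    (hp : -(d1*(d1+d2+d1-2) + d2*(d1+d2+d1-1)*k)*(A*l^2) + d2*((d2-1)*(d1+d2*k-1))*l
      - d2*((d1-1)*(d1+d2*k-k)) = 0) :
    (d2-1)*(4*(d1-1)*(d1+d2*k)^2 + d2^2*k^2)*l
      = 2*d1*(d1-1)*(2*(d1+d2*k)^2 + 2*k*(d1+d2*k) - d2*k^2) := by
  have hG := commonFactor_pos h1 h2 hk0 hk1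
  have hne : d2*(1-k)*commonFactor d1 d2 k ≠ 0 :=
    (mul_pos (mul_pos (by linarith) (by linarith)) hG).ne'
  apply mul_left_cancel₀ hne
  unfold commonFactor omega2 omega1 omega0 at *
  linear_combination (-(d1*(d1+d2+d1-2) + d2*(d1+d2+d1-1)*k)) * hw
    - ((2*d1 + d2*k)*((2*d1^2*d2^2 - d1*d2^3 + d2^3 - d2^2)*k^3
    + (4*d1^3*d2 - 4*d1^2*d2^2 - 2*d1^2*d2 + 4*d1*d2^2 - 2*d1*d2)*k^2
    + (2*d1^4 - 5*d1^3*d2 - 2*d1^3 + 5*d1^2*d2)*k - 2*d1^4 + 2*d1^3)) * hp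

/-- Eliminating the linear unknown `l` from `ω = P_Y = 0` determines `X = A l²`. -/
lemma eliminate_l {d1 d2 A k l : ℝ} (h1 : 2 ≤ d1) (h2 : d1 ≤ d2) (hk0 : 0 < k) (hk1 : k < 1)
    (hw : (2*d1 + d2*k)*omega2 d1 d2 k*(A*l^2) + d2*(d2-1)*k*omega1 d1 d2 k*l
      - d2*(d1-1)*k^2*omega0 d1 d2 k = 0)
    (hp : -(d1*(d1+d2+d1-2) + d2*(d1+d2+d1-1)*k)*(A*l^2) + d2*((d2-1)*(d1+d2*k-1))*l
      - d2*((d1-1)*(d1+d2*k-k)) = 0) :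
    (4*(d1-1)*(d1+d2*k)^2 + d2^2*k^2)*(A*l^2) = d2*(d1-1)*k*(4*d1+3*d2*k) := by
  have hG := commonFactor_pos h1 h2 hk0 hk1
  have hne : (d2-1)*(1-k)*commonFactor d1 d2 k ≠ 0 :=
    (mul_pos (mul_pos (by linarith) (by linarith)) hG).ne'
  apply mul_left_cancel₀ hne
  unfold commonFactor omega2 omega1 omega0 at *
  linear_combination (-((d2-1)*(d1+d2*k-1))) * hw
    + ((d2-1)*k*((d1*d2^3 - 4*d1*d2^2 - d2^3 + 3*d2^2)*k^3
    + (2*d1^2*d2^2 - 8*d1^2*d2 + 8*d1*d2 - 2*d2^2)*k^2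
    + (d1^3*d2 - 4*d1^3 + 5*d1^2*d2 + 4*d1^2 - 6*d1*d2)*k + 4*d1^3 - 4*d1^2)) * hp

/-- The function `u ↦ u²(4u - e)/(2u² + 2u - e)²` takes a strictly smaller value at `u > n` than
at `n`, stated without denominators. -/
lemma profile_lt {e n u : ℝ} (he : 2 ≤ e) (hn : e + 2 ≤ n) (hu : n < u) :
    u^2*(4*u-e)*(2*n^2+2*n-e)^2 < n^2*(4*n-e)*(2*u^2+2*u-e)^2 := by
  obtain ⟨b, rfl⟩ : ∃ b, e = 2 + b := ⟨e - 2, by ring⟩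
  obtain ⟨a, rfl⟩ : ∃ a, n = 4 + a + b := ⟨n - 4 - b, by ring⟩
  obtain ⟨y, rfl⟩ : ∃ y, u = 4 + a + b + y := ⟨u - (4 + a + b), by ring⟩
  have ha : 0 ≤ a := by linarith
  have hb : 0 ≤ b := by linarith
  have hy : 0 < y := by linarith
  -- In these shifted variables the difference of the two sides has nonnegative coefficients.
  rw [← sub_pos]
  ring_nf
  positivity

/-- Strict comparison of `f(u) = (4u - e)(4cu² + e²)/(2u² + 2u - e)²` at `u > n` with its value
at `n`, stated without denominators. -/
lemma full_profile_lt {c e n u : ℝ} (hc : 0 < c) (he : 2 ≤ e) (hn : e + 2 ≤ n) (hu : n < u) :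
    (4*u-e)*(4*c*u^2+e^2)*(2*n^2+2*n-e)^2 < (4*n-e)*(4*c*n^2+e^2)*(2*u^2+2*u-e)^2 := by
  have h := profile_lt he hn hu
  have hn0 : 0 < n := by linarith
  have hu0 : 0 < u := by linarith
  have hsq : n^2 ≤ u^2 := by gcongr
  have h' : n^2*(4*c*u^2+e^2) ≤ u^2*(4*c*n^2+e^2) := by
    nlinarith [mul_le_mul_of_nonneg_right hsq (sq_nonneg e)]
  have hun : 0 < u^2*n^2 := by positivity
  have hr : 0 ≤ n^2*(4*n-e)*(2*u^2+2*u-e)^2 := by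
    have : 0 ≤ 4*n-e := by linarith
    positivity
  apply lt_of_mul_lt_mul_left _ hun.le
  calc u^2*n^2*((4*u-e)*(4*c*u^2+e^2)*(2*n^2+2*n-e)^2)
      = (u^2*(4*u-e)*(2*n^2+2*n-e)^2)*(n^2*(4*c*u^2+e^2)) := by ring
    _ < (n^2*(4*n-e)*(2*u^2+2*u-e)^2)*(n^2*(4*c*u^2+e^2)) := by
        apply mul_lt_mul_of_pos_right h; positivity
    _ ≤ (n^2*(4*n-e)*(2*u^2+2*u-e)^2)*(u^2*(4*c*n^2+e^2)) :=
        mul_le_mul_of_nonneg_left h' hr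
    _ = u^2*n^2*((4*n-e)*(4*c*n^2+e^2)*(2*u^2+2*u-e)^2) := by ring

/-- `full_profile_lt` for `u = d1/k + d2` and `n = d1 + d2`, multiplied by `k^4` to clear the
powers of `1/k`. -/
lemma scaled_profile_lt {d1 d2 k : ℝ} (h1 : 2 ≤ d1) (h2 : d1 ≤ d2) (hk0 : 0 < k) (hk1 : k < 1) :
    k*(4*d1+3*d2*k)*(4*(d1-1)*(d1+d2*k)^2 + d2^2*k^2)*(2*(d1+d2)^2+2*(d1+d2)-d2)^2
      < (4*(d1+d2)-d2)*(4*(d1-1)*(d1+d2)^2+d2^2)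
        *(2*(d1+d2*k)^2 + 2*k*(d1+d2*k) - d2*k^2)^2 := by
  have hu : d1 + d2 < d1/k + d2 := by
    have : d1 < d1/k := by rw [lt_div_iff₀ hk0]; nlinarith
    linarith
  have hf := full_profile_lt (by linarith : 0 < d1 - 1) (by linarith : 2 ≤ d2)
    (by linarith : d2 + 2 ≤ d1 + d2) hu
  have hRu : k^2*(2*(d1/k+d2)^2 + 2*(d1/k+d2) - d2)
      = 2*(d1+d2*k)^2 + 2*k*(d1+d2*k) - d2*k^2 := by
    field_simp
  have hSu : k^2*(4*(d1-1)*(d1/k+d2)^2 + d2^2)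
      = 4*(d1-1)*(d1+d2*k)^2 + d2^2*k^2 := by
    field_simp
  have hTu : k^2*(4*(d1/k+d2) - d2) = k*(4*d1+3*d2*k) := by
    field_simp; ring
  rw [← hRu, ← hSu, ← hTu]
  generalize d1/k + d2 = u at *
  have h := mul_lt_mul_of_pos_left hf (by positivity : 0 < k^4)
  calc _ = k^4*((4*u-d2)*(4*(d1-1)*u^2+d2^2)*(2*(d1+d2)^2+2*(d1+d2)-d2)^2) := by ring
    _ < _ := h
    _ = _ := by ring

lemma Psi_eq (d1 d2 : ℝ) :
    Psi d1 d2 = d2*(d2-1)^2*((4*(d1+d2)-d2)*(4*(d1-1)*(d1+d2)^2+d2^2))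
      /(4*d1^2*(d1-1)*(2*(d1+d2)^2+2*(d1+d2)-d2)^2) := by
  unfold Psi
  rw [div_mul_div_comm]
  congr 1 <;> ring

/-- if `A ≥ Ψ`, then for every `k ∈ (0,1)` there is no real `l` with
`ω(A,k,l) = 0` and `P_Y(A,k,l) = 0`. -/
theorem statement7 (d1 d2 : ℕ) (h1 : 2 ≤ d1) (h2 : d1 ≤ d2) (A : ℝ)
    (hA : Psi d1 d2 ≤ A) :
    ∀ k ∈ Set.Ioo (0:ℝ) 1,
      ¬ ∃ l : ℝ, omega d1 d2 A k l = 0 ∧ PY d1 d2 A k l = 0 := by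
  have h1' : (2:ℝ) ≤ d1 := by exact_mod_cast h1
  have h2' : (d1:ℝ) ≤ d2 := by exact_mod_cast h2
  generalize (d1:ℝ) = d1 at *
  generalize (d2:ℝ) = d2 at *
  rintro k ⟨hk0, hk1⟩ ⟨l, hw, hp⟩
  have hd1 : 0 < d1 := by linarith
  have hd2 : 0 < d2 := by linarith
  have hc : 0 < d1 - 1 := by linarith
  have he : 0 < d2 - 1 := by linarith
  have hn : 0 < d1 + d2 - 1 := by linarith
  have hw' : (2*d1 + d2*k)*omega2 d1 d2 k*(A*l^2) + d2*(d2-1)*k*omega1 d1 d2 k*l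
      - d2*(d1-1)*k^2*omega0 d1 d2 k = 0 := by
    unfold omega at hw
    field_simp at hw
    linear_combination hw
  have hp' : -(d1*(d1+d2+d1-2) + d2*(d1+d2+d1-1)*k)*(A*l^2) + d2*((d2-1)*(d1+d2*k-1))*l
      - d2*((d1-1)*(d1+d2*k-k)) = 0 := by
    unfold PY at hp
    field_simp at hp
    linear_combination hp
  have hl := eliminate_X h1' h2' hk0 hk1 hw' hp'
  have hX := eliminate_l h1' h2' hk0 hk1 hw' hp'
  clear hw hp hw' hp'
  set R := 2*(d1+d2*k)^2 + 2*k*(d1+d2*k) - d2*k^2 with hR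
  set S := 4*(d1-1)*(d1+d2*k)^2 + d2^2*k^2 with hS
  have hAeq : 4*d1^2*(d1-1)*R^2*A = d2*(d2-1)^2*(k*(4*d1+3*d2*k))*S := by
    apply mul_left_cancel₀ hc.ne'
    linear_combination (-A*((d2-1)*S*l + 2*d1*(d1-1)*R)) * hl + (d2-1)^2*S * hX
  set m := d1 + d2 with hm
  have hfk : k*(4*d1+3*d2*k)*S*(2*m^2+2*m-d2)^2
      < (4*m-d2)*(4*(d1-1)*m^2+d2^2)*R^2 := scaled_profile_lt h1' h2' hk0 hk1
  have hP : 0 < 2*m^2+2*m-d2 := by linarith [sq_nonneg m]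
  have hR0 : 0 < R := by
    have : R = 2*d1^2 + 4*d1*d2*k + 2*d2^2*k^2 + 2*k*d1 + d2*k^2 := by rw [hR]; ring
    rw [this]; positivity
  have hPsi : Psi d1 d2
      = d2*(d2-1)^2*((4*m-d2)*(4*(d1-1)*m^2+d2^2))/(4*d1^2*(d1-1)*(2*m^2+2*m-d2)^2) :=
    Psi_eq d1 d2
  have hlt : A < Psi d1 d2 := by
    rw [hPsi, lt_div_iff₀ (by positivity)]
    apply lt_of_mul_lt_mul_right _ (sq_nonneg R)
    calc A*(4*d1^2*(d1-1)*(2*m^2+2*m-d2)^2)*R^2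
        = (4*d1^2*(d1-1)*R^2*A)*(2*m^2+2*m-d2)^2 := by ring
      _ = d2*(d2-1)^2*(k*(4*d1+3*d2*k)*S*(2*m^2+2*m-d2)^2) := by rw [hAeq]; ring
      _ < d2*(d2-1)^2*((4*m-d2)*(4*(d1-1)*m^2+d2^2)*R^2) :=
          mul_lt_mul_of_pos_left hfk (by positivity)
      _ = _ := by ring
  exact absurd hA (not_le.mpr hlt)
end
end

section
/- For all natural numbers d1, d2 with 2 ≤ d1 ≤ d2: ρ1(k) > 0 for all k ∈ (0,1]; the function k ↦ ρ0(k)/ρ1(k) is strictly increasing on (0,1]; and ρ0(1)/ρ1(1) = Ψ. -/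
/-!
Put `y = d1 / (d1 + d2 k) ∈ (0,1)` and `s = 1 / d2 ∈ (0,1/2]`. With `t = d1 + d2 k` one has
`d2 k = t (1 - y)` and `4 d1 + 3 d2 k = t (3 + y)`, and the quadratic inside `rho1` is
`t² (2 + s - s y²)`, so the powers of `t` cancel and
`rho0 / rho1 = C · (1 - y)(3 + y) / (2 + s - s y²)² · (4 (d1 - 1) + (1 - y)²)`
with a constant `C > 0` (`ratio_eq`). As `k` increases, `y` decreases; the last factor is
decreasing in `y`, and so is the middle one because `s ≤ 1/2` (`profile_lt`).
-/

noncomputable section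

open PaperDefs

lemma ratio_eq {c D k : ℝ} (hc : 2 ≤ c) (hD : 2 ≤ D) (hk : 0 < k) :
    rho0 c D k / rho1 c D k = (D-1)^2 / (4*c^2*(c-1)) *
      (((1 - c/(c+D*k)) * (3 + c/(c+D*k)) / (2 + 1/D - 1/D * (c/(c+D*k))^2)^2) *
        (4*(c-1) + (1 - c/(c+D*k))^2)) := by
  have hx : 0 < D*k := by positivity
  obtain ⟨t, ht⟩ : ∃ t, t = c + D*k := ⟨_, rfl⟩
  have ht0 : 0 < t := by rw [ht]; positivity
  obtain ⟨y, hy⟩ : ∃ y, y = c/t := ⟨_, rfl⟩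
  have hty : c = t*y := by rw [hy]; field_simp
  have hxy : D*k = t*(1-y) := by linarith
  obtain ⟨s, hs⟩ : ∃ s, s = 1/D := ⟨_, rfl⟩
  have hsD : s*D = 1 := by rw [hs]; field_simp
  have hq : 2*D^2*k^2 + D*k^2 + 4*c*D*k + 2*c*k + 2*c^2 = t^2*(2 + s - s*y^2) := by
    calc _ = 2*(c+D*k)^2 + s*D*(D*k^2 + 2*c*k) := by rw [hsD]; ring
      _ = 2*(c+D*k)^2 + s*((c+D*k)^2 - c^2) := by ring
      _ = _ := by rw [← ht, hty]; ring
  have hqpos : 0 < t^2*(2 + s - s*y^2) := by rw [← hq]; positivity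
  have hq0 : 0 < 2 + s - s*y^2 := pos_of_mul_pos_right hqpos (by positivity)
  have hc1 : 0 < c - 1 := by linarith
  have hn : rho0 c D k = (D-1)^2 * t^4 * ((1-y)*(3+y)*(4*(c-1) + (1-y)^2)) := by
    calc rho0 c D k
        = (D-1)^2*(D*k)*(4*c+3*(D*k))*(4*(c-1)*(c+D*k)^2+(D*k)^2) := by unfold rho0; ring
      _ = (D-1)^2*(t*(1-y))*(t*(3+y))*(4*(c-1)*t^2+(t*(1-y))^2) := by
          rw [← ht, hxy, show 4*c + 3*(t*(1-y)) = t*(3+y) by linear_combination 4*hty]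
      _ = _ := by ring
  rw [← ht, ← hy, ← hs, hn]
  unfold rho1
  rw [hq]
  field_simp

/-- The rational factor is strictly decreasing in `y` as soon as `s ≤ 1/2`. -/
lemma profile_lt_s8 {s y z : ℝ} (hs0 : 0 ≤ s) (hs : s ≤ 1/2) (hy : 0 < y) (hyz : y < z)
    (hz : z < 1) :
    (1-z)*(3+z) / (2+s-s*z^2)^2 < (1-y)*(3+y) / (2+s-s*y^2)^2 := by
  have hsz : s*z^2 ≤ s := mul_le_of_le_one_right hs0 (by nlinarith)
  have hsy : s*y^2 ≤ s := mul_le_of_le_one_right hs0 (by nlinarith)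
  have hsy0 : 0 ≤ s*y^2 := by positivity
  obtain ⟨q, hq⟩ : ∃ q, q = 2+s-s*z^2 := ⟨_, rfl⟩
  obtain ⟨r, hr⟩ : ∃ r, r = 2+s-s*y^2 := ⟨_, rfl⟩
  have hq2 : 2 ≤ q := by linarith
  have hrq : r ≤ 5/4*q := by linarith
  have hp : 0 < (1-z)*(3+z) := mul_pos (by linarith) (by linarith)
  rw [← hq, ← hr, div_lt_div_iff₀ (by positivity) (by rw [hr]; apply pow_pos; linarith)]
  -- The difference of the two sides is `z - y` times this bracket.
  have key : 0 < (2+y+z)*q^2 - (1-z)*(3+z)*(s*(y+z)*(r+q)) := by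
    have h1 : (1-z)*(3+z)*(s*(y+z)*(r+q)) ≤ (1-z)*(3+z)*(1/2*(y+z)*(9/4*q)) := by
      have : r + q ≤ 9/4*q := by linarith
      have : 0 ≤ r + q := by linarith
      have : 0 < y + z := by linarith
      gcongr
    have h2 : 9/8*((1-z)*(3+z)*(y+z)) < 4 + 2*(y+z) := by
      have : (1-z)*(3+z)*(y+z) ≤ (1-z)*(3+z)*(2*z) := by gcongr; linarith
      nlinarith [sq_nonneg (2*z-1), mul_pos (hy.trans hyz) (hy.trans hyz),
        pow_pos (hy.trans hyz) 3]
    have h3 : 0 < q * ((2+y+z)*q - 9/8*((1-z)*(3+z)*(y+z))) := by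
      apply mul_pos (by linarith)
      nlinarith
    nlinarith
  have hd : (1-y)*(3+y)*q^2 - (1-z)*(3+z)*r^2
      = (z-y)*((2+y+z)*q^2 - (1-z)*(3+z)*(s*(y+z)*(r+q))) := by
    have hrq' : r - q = s*(z-y)*(y+z) := by rw [hq, hr]; ring
    linear_combination (-(1-z)*(3+z)*(r+q))*hrq'
  have := mul_pos (sub_pos.2 hyz) key
  linarith

/-- `ρ₁ > 0` on `(0,1]`, `k ↦ ρ₀(k)/ρ₁(k)` is strictly increasing on `(0,1]`,
and `ρ₀(1)/ρ₁(1) = Ψ`. -/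
theorem statement8 (d1 d2 : ℕ) (h1 : 2 ≤ d1) (h2 : d1 ≤ d2) :
    (∀ k ∈ Set.Ioc (0:ℝ) 1, 0 < rho1 d1 d2 k) ∧
    StrictMonoOn (fun k : ℝ => rho0 d1 d2 k / rho1 d1 d2 k) (Set.Ioc (0:ℝ) 1) ∧
    rho0 d1 d2 1 / rho1 d1 d2 1 = Psi d1 d2 := by
  have hc : (2:ℝ) ≤ d1 := by exact_mod_cast h1
  have hD : (2:ℝ) ≤ d2 := by exact_mod_cast h1.trans h2
  generalize (d1:ℝ) = c at *
  generalize (d2:ℝ) = D at *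
  have hc1 : 0 < c - 1 := by linarith
  refine ⟨?_, ?_, ?_⟩
  · rintro k ⟨hk, -⟩
    unfold rho1
    positivity
  · rintro k ⟨hk, -⟩ l ⟨hl, -⟩ hkl
    have hlt : c/(c+D*l) < c/(c+D*k) := by gcongr
    have hy0 : 0 < c/(c+D*l) := by positivity
    have hz1 : c/(c+D*k) < 1 := by
      rw [div_lt_one (by positivity)]
      have : 0 < D*k := by positivity
      linarith
    have hs : 1/D ≤ 1/2 := one_div_le_one_div_of_le (by norm_num) hD
    have hprof := profile_lt_s8 (s := 1/D) (by positivity) hs hy0 hlt hz1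
    have hD1 : 0 < D - 1 := by linarith
    simp only [ratio_eq hc hD hk, ratio_eq hc hD hl]
    refine mul_lt_mul_of_pos_left ?_ (by positivity)
    have h1z : 0 ≤ 1 - c/(c+D*k) := by linarith
    have hsq : (1 - c/(c+D*k))^2 ≤ (1 - c/(c+D*l))^2 := by gcongr
    refine mul_lt_mul hprof (by linarith) (by positivity) ?_
    exact le_trans (by positivity) hprof.le
  · unfold rho0 rho1 Psi
    have e : 2*D^2*1^2 + D*1^2 + 4*c*D*1 + 2*c*1 + 2*c^2 = 2*(c+D)^2 + (c+D) + c := by ring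
    rw [e]
    have : 0 < 2*(c+D)^2 + (c+D) + c := by positivity
    field_simp
    ring
end
end

section
/- Let A > 0 be a real number and let k ∈ (-d1/d2, 0) satisfy P_X(k) > 0. If there exists a real number l̄ > 0 with ω(A,k,l̄) ≥ 0, then for every real number l with ω(A,k,l) ≥ 0 one has P_Y(A,k,l) > 0. -/
/-!
Put `k = -d1 (1 - t) / d2` with `t ∈ (0, 1)` and `K = d1 + d2 k = d1 t`. Up to a positive factor,
`P_X` is `q t = ((d1 - 1)(d2 - 1) - d1) t² + 2 d1 t - 1`, and on the whole range `ω₂ < 0 < ω₀`.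
So `ω(A, k, l̄) ≥ 0` with `l̄ > 0` forces `k ω₁ > 0`.

Clearing denominators, `ω ≥ 0` reads
`(d2 - 1) (k ω₁) l ≥ (2 d1 + d2 k) (-ω₂) A l² / d2 + (d1 - 1) k² ω₀`.
Comparing it coefficientwise with `P_Y > 0` after multiplication by `K - 1`, it is enough that
* `(K - 1)(2 d1 + d2 k) ω₂ + ((2 d1 + d2 - 1) K - d1) k ω₁ < 0` (`quadratic_coeff_neg`),
* `(K - 1) k ω₀ - (K - k) ω₁ < 0` (`constant_coeff_neg`),
the second of which also gives `K > 1`. Both left-hand sides are divisible by `q`, with a quotient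
that is negative on `(0, 1)`.
-/


noncomputable section

open PaperDefs

/-- The quadratic factor of `P_X` in the variable `t = (a + b k) / a`, up to a positive constant. -/
def qpoly (a b t : ℝ) : ℝ := ((a - 1) * (b - 1) - a) * t ^ 2 + 2 * a * t - 1

section
variable {a b t : ℝ}

lemma qpoly_pos (ha : 2 ≤ a) (hab : a ≤ b) (ht1 : t < 1)
    (h : 0 < PX a b (-(a * (1 - t)) / b)) : 0 < qpoly a b t := by
  have ha0 : 0 < a := by linarith
  have hb0 : 0 < b := by linarith
  have hN : 0 < a + b - 1 := by linarith
  have hs : 0 < 1 - t := by linarith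
  have e : PX a b (-(a * (1 - t)) / b)
      = qpoly a b t * (a / b * (1 + a * (1 - t) / b) / (a + b - 1)) := by
    unfold PX qpoly
    field_simp
    ring
  rw [e] at h
  exact (pos_iff_pos_of_mul_pos h).2 (by positivity)

lemma omega2_neg (ha : 2 ≤ a) (hab : a ≤ b) (ht0 : 0 < t) (ht1 : t < 1) :
    omega2 a b (-(a * (1 - t)) / b) < 0 := by
  have ha0 : 0 < a := by linarith
  have hb0 : 0 < b := by linarith
  have hs : 0 < 1 - t := by linarith
  have e : omega2 a b (-(a * (1 - t)) / b) = -(a ^ 3 / b *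
      ((1 - t) ^ 3 + (a - 1) * t * (b * t * (1 + t) + 2 * a * (1 - t) * t - 2 * (1 - t) ^ 2))) := by
    unfold omega2
    field_simp
    ring
  -- Since `b ≥ a` and `1 + t + 2 (1 - t) ≥ 2`, it is enough to bound an expression which, for
  -- fixed `s = 1 - t`, is a quadratic in `t` of negative discriminant.
  have h1 : 2 * a * t ≤ b * t * (1 + t) + 2 * a * (1 - t) * t := by
    nlinarith [mul_nonneg (sub_nonneg.2 hab) (by positivity : 0 ≤ t * (1 + t)),
      mul_pos (mul_pos ha0 ht0) hs]
  have h2 : 0 ≤ (a - 1) * t := mul_nonneg (by linarith) ht0.le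
  have h3 := mul_le_mul_of_nonneg_left h1 h2
  have h4 : 0 < (1 - t) ^ 3 + 2 * (a - 1) * a * t ^ 2 - 2 * (a - 1) * t * (1 - t) ^ 2 := by
    have i : 2 * ((1 - t) ^ 3 + 2 * (a - 1) * a * t ^ 2 - 2 * (a - 1) * t * (1 - t) ^ 2)
        = (1 - t) * (2 * (a - 1) * t - (1 - t)) ^ 2 + (1 - t) ^ 3
          + 4 * (a - 1) * t ^ 2 * (1 + (a - 1) * t) := by ring
    have j : 0 < a - 1 := by linarith
    have : 0 < 2 * ((1 - t) ^ 3 + 2 * (a - 1) * a * t ^ 2 - 2 * (a - 1) * t * (1 - t) ^ 2) := by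
      rw [i]; positivity
    linarith
  rw [e, neg_lt_zero]
  exact mul_pos (by positivity) (by nlinarith)

lemma omega0_pos (ha : 2 ≤ a) (hab : a ≤ b) (ht0 : 0 < t) (ht1 : t < 1) :
    0 < omega0 a b (-(a * (1 - t)) / b) := by
  have ha0 : 0 < a := by linarith
  have hb0 : 0 < b := by linarith
  have hs : 0 < 1 - t := by linarith
  have ha1 : 0 < a - 1 := by linarith
  have e : omega0 a b (-(a * (1 - t)) / b) = a ^ 2 / b *
      ((a - 1) * b ^ 2 * t ^ 2 + 2 * a * b * (1 - t) * t + 2 * a * (1 - t) * (1 + t)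
        + b * (1 + t) ^ 2) := by
    unfold omega0
    field_simp
    ring
  rw [e]
  positivity

lemma quadratic_coeff_neg (ha : 2 ≤ a) (hab : a ≤ b) (ht0 : 0 < t) (ht1 : t < 1)
    (hq : 0 < qpoly a b t) {k : ℝ} (hk : k = -(a * (1 - t)) / b) :
    (a + b * k - 1) * (2 * a + b * k) * omega2 a b k
      + ((2 * a + b - 1) * (a + b * k) - a) * (k * omega1 a b k) < 0 := by
  have ha0 : 0 < a := by linarith
  have hb0 : 0 < b := by linarith
  have e : (a + b * k - 1) * (2 * a + b * k) * omega2 a b k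
      + ((2 * a + b - 1) * (a + b * k) - a) * (k * omega1 a b k)
      = -(qpoly a b t * (a ^ 4 / b ^ 2) * ((a + b) - (3 * a + 2 * b) * t
          + ((4 * a - 3) * b + 4 * a ^ 2 - a) * t ^ 2 - (4 * a ^ 2 - 3 * a) * t ^ 3)) := by
    subst hk
    unfold omega2 omega1 qpoly
    field_simp
    ring
  have h1 : 0 ≤ (4 * a ^ 2 - 3 * a) * (t ^ 2 * (1 - t)) :=
    mul_nonneg (by nlinarith) (mul_nonneg (sq_nonneg t) (by linarith))
  -- Bounding `t³` by `t²` leaves a quadratic in `t` of negative discriminant.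
  have h2 : 0 < (a + b) - (3 * a + 2 * b) * t + ((4 * a - 3) * b + 2 * a) * t ^ 2 := by
    have disc : (3 * a + 2 * b) ^ 2 < 4 * (a + b) * ((4 * a - 3) * b + 2 * a) := by
      nlinarith [mul_nonneg (sub_nonneg.2 ha) (by positivity : 0 ≤ b * b),
        mul_nonneg (sub_nonneg.2 ha) (by positivity : 0 ≤ a * b),
        mul_nonneg (sub_nonneg.2 hab) hb0.le, mul_nonneg (sub_nonneg.2 hab) ha0.le,
        mul_pos ha0 hb0]
    have : 0 < 4 * (a + b) *
        ((a + b) - (3 * a + 2 * b) * t + ((4 * a - 3) * b + 2 * a) * t ^ 2) := by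
      nlinarith [sq_nonneg (2 * (a + b) - (3 * a + 2 * b) * t),
        mul_pos (sub_pos.2 disc) (pow_pos ht0 2)]
    exact (pos_iff_pos_of_mul_pos this).1 (by positivity)
  rw [e, neg_lt_zero]
  exact mul_pos (by positivity) (by nlinarith)

lemma constant_coeff_neg (ha : 2 ≤ a) (hab : a ≤ b) (ht0 : 0 < t) (ht1 : t < 1)
    (hq : 0 < qpoly a b t) {k : ℝ} (hk : k = -(a * (1 - t)) / b) :
    (a + b * k - 1) * k * omega0 a b k - (a + b * k - k) * omega1 a b k < 0 := by
  have ha0 : 0 < a := by linarith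
  have hb0 : 0 < b := by linarith
  have e : (a + b * k - 1) * k * omega0 a b k - (a + b * k - k) * omega1 a b k
      = -(qpoly a b t * (a ^ 3 / b ^ 2) * ((a + b) + (2 * a + 3 * b) * t - 3 * a * t ^ 2)) := by
    subst hk
    unfold omega0 omega1 qpoly
    field_simp
    ring
  have h : 0 < (a + b) + (2 * a + 3 * b) * t - 3 * a * t ^ 2 := by
    nlinarith [mul_pos (mul_pos ha0 ht0) (sub_pos.2 ht1), mul_nonneg (sub_nonneg.2 hab) ht0.le,
      mul_pos ha0 ht0]
  rw [e, neg_lt_zero]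
  exact mul_pos (by positivity) h

end

/-- The statement for real parameters. From the coefficients `ω₂`, `k ω₁`, `ω₀` (named `w2`, `B`,
`Z` below) it uses only `ω₂ < 0 < ω₀` and the inequalities `quadratic_coeff_neg` and
`constant_coeff_neg`. -/
lemma PY_pos_real {a b A k : ℝ} (ha : 2 ≤ a) (hab : a ≤ b) (hA : 0 < A) (hk0 : -a / b < k)
    (hk1 : k < 0) (hPX : 0 < PX a b k) {lbar : ℝ} (hl0 : 0 < lbar)
    (hl : 0 ≤ omega a b A k lbar) {l : ℝ} (hw : 0 ≤ omega a b A k l) : 0 < PY a b A k l := by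
  have ha0 : 0 < a := by linarith
  have hb0 : 0 < b := by linarith
  have ha1 : 0 < a - 1 := by linarith
  have hb1 : 0 < b - 1 := by linarith
  have hN : 0 < a + b - 1 := by linarith
  have hK : 0 < a + b * k := by
    rw [div_lt_iff₀ hb0] at hk0
    linarith
  have hbk : b * k < 0 := mul_neg_of_pos_of_neg hb0 hk1
  obtain ⟨t, ht⟩ : ∃ t, t = (a + b * k) / a := ⟨_, rfl⟩
  have hat : a * t = a + b * k := by
    rw [ht]
    field_simp
  have ht0 : 0 < t := by rw [ht]; positivity
  have ht1 : t < 1 := by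
    rw [ht, div_lt_one ha0]
    linarith
  have hkt : k = -(a * (1 - t)) / b := by
    rw [eq_div_iff hb0.ne']
    linarith
  have hq : 0 < qpoly a b t := qpoly_pos ha hab ht1 (hkt ▸ hPX)
  have hW : 0 < -omega2 a b k := neg_pos.2 (hkt ▸ omega2_neg ha hab ht0 ht1)
  have hZ : 0 < omega0 a b k := hkt ▸ omega0_pos ha hab ht0 ht1
  have hE := quadratic_coeff_neg ha hab ht0 ht1 hq hkt
  have hG := constant_coeff_neg ha hab ht0 ht1 hq hkt
  have key : ∀ x : ℝ, 0 ≤ omega a b A k x →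
      (2 * a + b * k) * -omega2 a b k * (A * x ^ 2 / b) + (a - 1) * (k ^ 2 * omega0 a b k)
        ≤ (b - 1) * (k * omega1 a b k) * x := by
    intro x hx
    unfold omega at hx
    have := nonneg_of_mul_nonneg_right hx (by positivity)
    have e : (2 * a + b * k) / b * omega2 a b k * A * x ^ 2
        = (2 * a + b * k) * omega2 a b k * (A * x ^ 2 / b) := by ring
    rw [e] at this
    linarith
  have goal_eq : PY a b A k l * (a + b - 1) =
      -((2 * a + b - 1) * (a + b * k) - a) * (A * l ^ 2 / b)
        + (b - 1) * (a + b * k - 1) * l - (a - 1) * (a + b * k - k) := by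
    unfold PY
    field_simp
    ring
  have h1 := key lbar hl
  have h2 := key l hw
  have hC : 0 < 2 * a + b * k := by linarith
  have hk2 : 0 < k ^ 2 := sq_pos_of_neg hk1
  generalize omega2 a b k = w2 at *
  generalize omega0 a b k = Z at *
  have hG' : (a + b * k - k) * (k * omega1 a b k) < (a + b * k - 1) * (k ^ 2 * Z) := by
    nlinarith [mul_pos_of_neg_of_neg hG hk1]
  generalize k * omega1 a b k = B at *
  have hpos : ∀ x : ℝ, 0 < (2 * a + b * k) * -w2 * (A * x ^ 2 / b) + (a - 1) * (k ^ 2 * Z) :=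
    fun x => by positivity
  have hB : 0 < B := by
    have h := (hpos lbar).trans_le h1
    have h' := (pos_iff_pos_of_mul_pos h).2 hl0
    exact (pos_iff_pos_of_mul_pos h').1 hb1
  have hK1 : 0 < a + b * k - 1 := by
    have h : 0 < (a + b * k - k) * B := mul_pos (by linarith) hB
    exact (pos_iff_pos_of_mul_pos (h.trans hG')).2 (by positivity)
  have hY : 0 ≤ A * l ^ 2 / b := by positivity
  generalize A * l ^ 2 / b = Y at *
  have f1 := mul_le_mul_of_nonneg_left h2 hK1.le
  have f2 := mul_nonneg (neg_pos.2 hE).le hY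
  have f3 := mul_lt_mul_of_pos_left hG' ha1
  have f4 : 0 < (PY a b A k l * (a + b - 1)) * B := by
    rw [goal_eq]
    linarith
  have f5 := (pos_iff_pos_of_mul_pos f4).2 hB
  exact (pos_iff_pos_of_mul_pos f5).2 hN

/-- let `A > 0` and `k ∈ (-d1/d2, 0)` with `P_X(k) > 0`.  If there is a
real `l̄ > 0` with `ω(A,k,l̄) ≥ 0`, then every real `l` with `ω(A,k,l) ≥ 0` satisfies
`P_Y(A,k,l) > 0`. -/
theorem statement9 (d1 d2 : ℕ) (h1 : 2 ≤ d1) (h2 : d1 ≤ d2) (A : ℝ) (hA : 0 < A)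
    (k : ℝ) (hk : k ∈ Set.Ioo (-(d1:ℝ)/(d2:ℝ)) 0) (hPX : 0 < PX d1 d2 k)
    (hex : ∃ lbar : ℝ, 0 < lbar ∧ 0 ≤ omega d1 d2 A k lbar) :
    ∀ l : ℝ, 0 ≤ omega d1 d2 A k l → 0 < PY d1 d2 A k l := by
  obtain ⟨lbar, hl0, hl⟩ := hex
  intro l hw
  exact PY_pos_real (by exact_mod_cast h1) (by exact_mod_cast h2) hA hk.1 hk.2 hPX hl0 hl hw
end
end

section
/- If in addition d1 ≥ 4, then the function Ω is monotone increasing on [0,1]: for all real numbers k, k' with 0 ≤ k ≤ k' ≤ 1 one has Ω(k) ≤ Ω(k'). -/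
/-! `Ω` equals `C · ω₁² / G`, where `C = d2 (d2-1)² / (4 (d1-1)) ≥ 0` and
`G = (2 d1 + d2 k) · ω₀ · (-ω₂)`.  Its derivative is `C · ω₁ · (2 ω₁' G - ω₁ G') / G²`, and the
bracket factors as `4 · d2 · α₄ · μ` (`bracket_eq`), with `μ` the quartic `muPoly` in `k`.
Hence it suffices that `ω₀`, `ω₁`, `-ω₂` are positive and `α₄`, `μ` are nonnegative on `[0,1]`.

These signs are read off from coefficients in `k` after writing `d1 = x + 4`, `d2 = x + y + 4` with
`x, y ≥ 0`.  For `ω₀`, `α₄` and `μ` every coefficient is then a polynomial in `x, y` with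
nonnegative coefficients; for `ω₁` and `-ω₂` this holds for the partial sums of the coefficients in
`k`, which is enough on `[0,1]` by summation by parts (`cubic_pos`).  The hypothesis `4 ≤ d1` is
sharp for `μ`, whose constant term is `d1⁴ (d1 - 1) (d1 - 4)`. -/

noncomputable section

open PaperDefs

namespace PaperDefs

/-- The quartic cofactor of `α₄` in the numerator of the derivative of `Ω`; see `bracket_eq`. -/
def muPoly (a b k : ℝ) : ℝ :=
  (a^2*b^4 - 2*a*b^4 - a^2*b^3 + b^4 + 2*a*b^3 - 2*a^2*b^2 - b^3 + a*b^2)*k^4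
    + (4*a^3*b^3 - 10*a^2*b^3 - 2*a^3*b^2 + 6*a*b^3 + 10*a^2*b^2 - 6*a^3*b - 6*a*b^2
        + 4*a^2*b)*k^3
    + (6*a^4*b^2 - 19*a^3*b^2 - a^4*b + 13*a^2*b^2 + 16*a^3*b - 4*a^4 - 12*a^2*b + 4*a^3)*k^2
    + (4*a^5*b - 16*a^4*b + 12*a^3*b + 8*a^4 - 8*a^3)*k
    + a^4*(a - 1)*(a - 4)

/-- The derivative of `ω₀` in `k`. -/
def omega0Deriv (d1 d2 k : ℝ) : ℝ :=
  2*(d1*d2^3 - 2*d1*d2^2 - d2^3 - 2*d1*d2 + d2^2)*k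
    + (2*d1^2*d2^2 - 2*d1^2*d2 - 2*d1*d2^2 - 4*d1^2 + 4*d1*d2)

/-- The derivative of `ω₁` in `k`. -/
def omega1Deriv (d1 d2 k : ℝ) : ℝ :=
  3*(d1*d2^3 - 4*d1*d2^2 - d2^3 + 3*d2^2)*k^2
    + 2*(2*d1^2*d2^2 - 8*d1^2*d2 + 8*d1*d2 - 2*d2^2)*k
    + (d1^3*d2 - 4*d1^3 + 5*d1^2*d2 + 4*d1^2 - 6*d1*d2)

/-- The derivative of `ω₂` in `k`. -/
def omega2Deriv (d1 d2 k : ℝ) : ℝ :=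
  3*(2*d1^2*d2^2 - d1*d2^3 + d2^3 - d2^2)*k^2
    + 2*(4*d1^3*d2 - 4*d1^2*d2^2 - 2*d1^2*d2 + 4*d1*d2^2 - 2*d1*d2)*k
    + (2*d1^4 - 5*d1^3*d2 - 2*d1^3 + 5*d1^2*d2)

/-- The denominator `G = (2 d1 + d2 k) · ω₀ · (-ω₂)` of `Ω`, up to a constant factor. -/
def denomG (d1 d2 k : ℝ) : ℝ := (2*d1 + d2*k)*omega0 d1 d2 k*(-omega2 d1 d2 k)

/-- The derivative of `G` in `k`. -/
def denomGDeriv (d1 d2 k : ℝ) : ℝ :=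
  (d2*omega0 d1 d2 k + (2*d1 + d2*k)*omega0Deriv d1 d2 k)*(-omega2 d1 d2 k)
    + (2*d1 + d2*k)*omega0 d1 d2 k*(-omega2Deriv d1 d2 k)

/-- The factorisation that determines the sign of `Ω'`. -/
theorem bracket_eq (d1 d2 k : ℝ) :
    2*omega1Deriv d1 d2 k*denomG d1 d2 k - omega1 d1 d2 k*denomGDeriv d1 d2 k
      = 4*d2*alpha4 d1 d2 k*muPoly d1 d2 k := by
  unfold denomGDeriv denomG omega0Deriv omega1Deriv omega2Deriv omega0 omega1 omega2 alpha4 muPoly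
  ring

theorem hasDerivAt_cubic (c3 c2 c1 c0 k : ℝ) :
    HasDerivAt (fun k : ℝ => c3*k^3 + c2*k^2 + c1*k + c0) (3*c3*k^2 + 2*c2*k + c1) k := by
  have h := ((((hasDerivAt_pow 3 k).const_mul c3).add ((hasDerivAt_pow 2 k).const_mul c2)).add
    ((hasDerivAt_id k).const_mul c1)).add_const c0
  refine h.congr_deriv ?_
  norm_num
  ring

theorem hasDerivAt_omega0 (d1 d2 k : ℝ) :
    HasDerivAt (omega0 d1 d2) (omega0Deriv d1 d2 k) k := by
  convert hasDerivAt_cubic 0 (d1*d2^3 - 2*d1*d2^2 - d2^3 - 2*d1*d2 + d2^2)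
    (2*d1^2*d2^2 - 2*d1^2*d2 - 2*d1*d2^2 - 4*d1^2 + 4*d1*d2)
    (d1^3*d2 - d1^2*d2 + 4*d1^2) k using 1
  · funext t; unfold omega0; ring
  · unfold omega0Deriv; ring

theorem hasDerivAt_omega1 (d1 d2 k : ℝ) :
    HasDerivAt (omega1 d1 d2) (omega1Deriv d1 d2 k) k := by
  convert hasDerivAt_cubic (d1*d2^3 - 4*d1*d2^2 - d2^3 + 3*d2^2)
    (2*d1^2*d2^2 - 8*d1^2*d2 + 8*d1*d2 - 2*d2^2)
    (d1^3*d2 - 4*d1^3 + 5*d1^2*d2 + 4*d1^2 - 6*d1*d2) (4*d1^3 - 4*d1^2) k using 1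
  · funext t; unfold omega1; ring
  · rfl

theorem hasDerivAt_omega2 (d1 d2 k : ℝ) :
    HasDerivAt (omega2 d1 d2) (omega2Deriv d1 d2 k) k := by
  convert hasDerivAt_cubic (2*d1^2*d2^2 - d1*d2^3 + d2^3 - d2^2)
    (4*d1^3*d2 - 4*d1^2*d2^2 - 2*d1^2*d2 + 4*d1*d2^2 - 2*d1*d2)
    (2*d1^4 - 5*d1^3*d2 - 2*d1^3 + 5*d1^2*d2) (-2*d1^4 + 2*d1^3) k using 1
  · funext t; unfold omega2; ring
  · rfl

theorem hasDerivAt_denomG (d1 d2 k : ℝ) :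
    HasDerivAt (denomG d1 d2) (denomGDeriv d1 d2 k) k := by
  have hlin : HasDerivAt (fun k : ℝ => 2*d1 + d2*k) d2 k := by
    simpa using ((hasDerivAt_id k).const_mul d2).const_add (2*d1)
  exact (hlin.mul (hasDerivAt_omega0 d1 d2 k)).mul (hasDerivAt_omega2 d1 d2 k).neg

/-- Summation by parts: a cubic whose coefficients have nonnegative partial sums, the first and the
last one being positive, is positive on `[0,1]`. -/
theorem cubic_pos {c0 c1 c2 c3 k : ℝ} (h0 : 0 < c0) (h1 : 0 ≤ c0 + c1) (h2 : 0 ≤ c0 + c1 + c2)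
    (h3 : 0 < c0 + c1 + c2 + c3) (hk : 0 ≤ k) (hk1 : k ≤ 1) :
    0 < c3*k^3 + c2*k^2 + c1*k + c0 := by
  have ht : 0 ≤ 1 - k := by linarith
  have e : c3*k^3 + c2*k^2 + c1*k + c0 = c0*(1 - k) + (c0 + c1)*(k*(1 - k))
      + (c0 + c1 + c2)*(k^2*(1 - k)) + (c0 + c1 + c2 + c3)*k^3 := by ring
  rw [e]
  rcases hk.eq_or_lt with rfl | hk'
  · simpa using h0
  · positivity

theorem exists_shift {a b : ℝ} (ha : 4 ≤ a) (hab : a ≤ b) :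
    ∃ x y : ℝ, 0 ≤ x ∧ 0 ≤ y ∧ a = x + 4 ∧ b = x + y + 4 :=
  ⟨a - 4, b - a, by linarith, by linarith, by ring, by ring⟩

theorem omega0_pos {a b k : ℝ} (ha : 4 ≤ a) (hab : a ≤ b) (hk : 0 ≤ k) : 0 < omega0 a b k := by
  obtain ⟨x, y, hx, hy, rfl, rfl⟩ := exists_shift ha hab
  unfold omega0
  ring_nf
  positivity

theorem omega1_pos {a b k : ℝ} (ha : 4 ≤ a) (hab : a ≤ b) (hk : 0 ≤ k) (hk1 : k ≤ 1) :
    0 < omega1 a b k := by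
  obtain ⟨x, y, hx, hy, rfl, rfl⟩ := exists_shift ha hab
  unfold omega1
  rw [add_sub_assoc]
  apply cubic_pos _ _ _ _ hk hk1 <;> ring_nf <;> positivity

theorem omega2_neg {a b k : ℝ} (ha : 4 ≤ a) (hab : a ≤ b) (hk : 0 ≤ k) (hk1 : k ≤ 1) :
    0 < -omega2 a b k := by
  obtain ⟨x, y, hx, hy, rfl, rfl⟩ := exists_shift ha hab
  unfold omega2
  rw [sub_add, sub_eq_add_neg]
  simp only [neg_add, ← neg_mul]
  apply cubic_pos _ _ _ _ hk hk1 <;> ring_nf <;> positivity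

theorem alpha4_nonneg {a b k : ℝ} (ha : 4 ≤ a) (hab : a ≤ b) (hk : 0 ≤ k) :
    0 ≤ alpha4 a b k := by
  obtain ⟨x, y, hx, hy, rfl, rfl⟩ := exists_shift ha hab
  unfold alpha4
  ring_nf
  positivity

theorem muPoly_nonneg {a b k : ℝ} (ha : 4 ≤ a) (hab : a ≤ b) (hk : 0 ≤ k) :
    0 ≤ muPoly a b k := by
  obtain ⟨x, y, hx, hy, rfl, rfl⟩ := exists_shift ha hab
  unfold muPoly
  ring_nf
  positivity

theorem OmegaFun_eq {d1 d2 k : ℝ} :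
    OmegaFun d1 d2 k
      = d2*(d2-1)^2/(4*(d1-1)) * (omega1 d1 d2 k^2/denomG d1 d2 k) := by
  unfold OmegaFun denomG
  rw [div_mul_div_comm, ← neg_div_neg_eq]
  congr 1 <;> ring

end PaperDefs

/-- if moreover `d1 ≥ 4`, then `Ω` is monotone increasing on `[0,1]`. -/
theorem statement12 (d1 d2 : ℕ) (h1 : 2 ≤ d1) (h2 : d1 ≤ d2) (h4 : 4 ≤ d1) :
    ∀ k k' : ℝ, 0 ≤ k → k ≤ k' → k' ≤ 1 →
      OmegaFun d1 d2 k ≤ OmegaFun d1 d2 k' := by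
  have ha : (4 : ℝ) ≤ d1 := by exact_mod_cast h4
  have hab : (d1 : ℝ) ≤ d2 := by exact_mod_cast h2
  generalize (d1 : ℝ) = a at *
  generalize (d2 : ℝ) = b at *
  have hG : ∀ k ∈ Set.Icc (0:ℝ) 1, 0 < denomG a b k := fun k hk => by
    have h0 := omega0_pos ha hab hk.1
    have h2 := omega2_neg ha hab hk.1 hk.2
    have hlin : 0 < 2*a + b*k := by nlinarith [hk.1]
    exact mul_pos (mul_pos hlin h0) h2
  have hder : ∀ k ∈ Set.Icc (0:ℝ) 1, HasDerivAt (fun k => omega1 a b k^2/denomG a b k)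
      (omega1 a b k*(4*b*alpha4 a b k*muPoly a b k)/denomG a b k^2) k := fun k hk => by
    refine (((hasDerivAt_omega1 a b k).pow 2).div (hasDerivAt_denomG a b k)
      (hG k hk).ne').congr_deriv ?_
    rw [← bracket_eq]
    congr 1
    simp only [Pi.pow_apply]
    push_cast
    ring
  have hmono : MonotoneOn (fun k => omega1 a b k^2/denomG a b k) (Set.Icc 0 1) := by
    refine monotoneOn_of_deriv_nonneg (convex_Icc 0 1)
      (fun k hk => (hder k hk).continuousAt.continuousWithinAt)
      (fun k hk => (hder k (interior_subset hk)).differentiableAt.differentiableWithinAt)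
      (fun k hk => ?_)
    have hk' := interior_subset hk
    rw [(hder k hk').deriv]
    have h1 := omega1_pos ha hab hk'.1 hk'.2
    have h4 := alpha4_nonneg ha hab hk'.1
    have hm := muPoly_nonneg ha hab hk'.1
    have hb : 0 ≤ b := by linarith
    positivity
  intro k k' hk hkk' hk'
  rw [OmegaFun_eq, OmegaFun_eq]
  have hC : 0 ≤ b*(b-1)^2/(4*(a-1)) := by
    have : 0 ≤ a - 1 := by linarith
    have : 0 ≤ b := by linarith
    positivity
  exact mul_le_mul_of_nonneg_left
    (hmono ⟨hk, hkk'.trans hk'⟩ ⟨hk.trans hkk', hk'⟩ hkk') hC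
end
end

section
/- For all natural numbers d1, d2 with 2 ≤ d1 ≤ d2 and every real k ∈ [0,1], one has β2(k) > 0. -/
noncomputable section

open PaperDefs

/-- for every `k ∈ [0,1]`, `β₂(k) > 0`. -/
theorem statement17 (d1 d2 : ℕ) (h1 : 2 ≤ d1) (h2 : d1 ≤ d2) :
    ∀ k ∈ Set.Icc (0:ℝ) 1, 0 < beta2 d1 d2 k := by
  intro k hk
  obtain ⟨hk0, hk1⟩ := hk
  have a1 : (2:ℝ) ≤ d1 := by exact_mod_cast h1
  have a2 : (d1:ℝ) ≤ d2 := by exact_mod_cast h2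
  by_cases h3 : d2 = 2
  -- The factor `m = (d1 - 1)(d2 - 2) - 1` used below is negative only for `d1 = d2 = 2`.
  · obtain rfl : d1 = 2 := by omega
    subst h3
    have key : beta2 ((2:ℕ):ℝ) ((2:ℕ):ℝ) k = 4 * ((k + 2) * (2 - k ^ 2)) := by
      unfold beta2
      push_cast
      ring
    rw [key]
    have : 0 < 2 - k ^ 2 := by nlinarith
    positivity
  · have a3 : (3:ℝ) ≤ d2 := by
      have : 3 ≤ d2 := by omega
      exact_mod_cast this
    -- The coefficients of `k³` and `k²` are `d2² m` and `2 d1 d2 m`, so completing the square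
    -- leaves a remainder that is affine in `k`, with nonnegative coefficients.
    have key : beta2 d1 d2 k = (((d1:ℝ) - 1) * (d2 - 2) - 1) * k * (d1 + d2 * k) ^ 2
        + (d1:ℝ) ^ 2 * ((2 * d2 - 1) * k + 2 * d1) := by
      unfold beta2
      ring
    rw [key]
    have hm : 0 ≤ ((d1:ℝ) - 1) * (d2 - 2) - 1 := by nlinarith
    have hd : 0 ≤ 2 * (d2:ℝ) - 1 := by linarith
    positivity
end
end

section
/- If in addition d1 ≥ 4, then the function F(k) = d2*(d2-1)^2*β2(k)/(d1^2*(2*d1 + d2*k)*ω0(k)) is monotone increasing on [0,1] (for all 0 ≤ k ≤ k' ≤ 1, F(k) ≤ F(k')); in particular, for every k ∈ [0,1] one has F(k) ≥ F(0) = d2*(d2-1)^2/(d1^2*(d1*d2 - d2 + 4)). -/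
/-!
Up to the positive constant `d2 (d2-1)² / d1²`, the function `F` is the quotient of the cubics
`N(k) = β₂(k) = ∑ bᵢ kⁱ` and `D(k) = (2 d1 + d2 k) ω₀(k) = ∑ cᵢ kⁱ`. If the ratios `bᵢ / cᵢ` increase with `i`,
that is if all minors `bᵢ cⱼ - bⱼ cᵢ` with `j < i` are nonnegative, then the quotient is monotone on
`[0, ∞)`, because `N(k') D(k) - N(k) D(k')` is the sum of these minors times
`k'ⁱ kʲ - k'ʲ kⁱ ≥ 0` (`cubic_cross_le`).

For `d1 = 4 + a` and `d2 = 4 + a + b` with `a, b ≥ 0`, every coefficient of `ω₀` and every one of the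
six minors is a polynomial in `a, b` with nonnegative coefficients (`omega0_pos`, `cross_le`), which
is where `d1 ≥ 4` and `d1 ≤ d2` enter.
-/

noncomputable section

open PaperDefs

/-- A quotient of cubics is monotone on `[0, ∞)`, in cross-multiplied form, when the coefficient
ratios `bᵢ / cᵢ` increase with `i`; the latter is stated through the minors `bᵢ cⱼ - bⱼ cᵢ`, so no
sign of the `cᵢ` is needed. -/
lemma cubic_cross_le {b0 b1 b2 b3 c0 c1 c2 c3 x y : ℝ} (hx : 0 ≤ x) (hxy : x ≤ y)
    (h10 : 0 ≤ b1 * c0 - b0 * c1) (h20 : 0 ≤ b2 * c0 - b0 * c2) (h30 : 0 ≤ b3 * c0 - b0 * c3)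
    (h21 : 0 ≤ b2 * c1 - b1 * c2) (h31 : 0 ≤ b3 * c1 - b1 * c3) (h32 : 0 ≤ b3 * c2 - b2 * c3) :
    (b3 * x ^ 3 + b2 * x ^ 2 + b1 * x + b0) * (c3 * y ^ 3 + c2 * y ^ 2 + c1 * y + c0) ≤
      (b3 * y ^ 3 + b2 * y ^ 2 + b1 * y + b0) * (c3 * x ^ 3 + c2 * x ^ 2 + c1 * x + c0) := by
  have hy : 0 ≤ y := hx.trans hxy
  have hd : 0 ≤ y - x := sub_nonneg.2 hxy
  rw [← sub_nonneg]
  have key : 0 ≤ (y - x) * ((b1 * c0 - b0 * c1) + (b2 * c0 - b0 * c2) * (x + y)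
      + (b3 * c0 - b0 * c3) * (x ^ 2 + x * y + y ^ 2) + (b2 * c1 - b1 * c2) * (x * y)
      + (b3 * c1 - b1 * c3) * (x * y * (x + y)) + (b3 * c2 - b2 * c3) * (x ^ 2 * y ^ 2)) := by
    positivity
  convert key using 1
  ring

lemma omega0_pos_s18 {a b k : ℝ} (ha : 0 ≤ a) (hb : 0 ≤ b) (hk : 0 ≤ k) :
    0 < omega0 (4 + a) (4 + a + b) k := by
  unfold omega0
  ring_nf
  positivity

/-- Monotonicity of `β₂(k) / ((2 d1 + d2 k) ω₀(k))` in cross-multiplied form, with `d1 = 4 + a` and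
`d2 = 4 + a + b`. -/
lemma cross_le {a b x y : ℝ} (ha : 0 ≤ a) (hb : 0 ≤ b) (hx : 0 ≤ x) (hxy : x ≤ y) :
    beta2 (4 + a) (4 + a + b) x *
        ((2 * (4 + a) + (4 + a + b) * y) * omega0 (4 + a) (4 + a + b) y) ≤
      beta2 (4 + a) (4 + a + b) y *
        ((2 * (4 + a) + (4 + a + b) * x) * omega0 (4 + a) (4 + a + b) x) := by
  -- The coefficients of `k ↦ (2 d1 + d2 k) ω₀(k)`, given those of `ω₀`.
  have expand (p q o0 o1 o2 k : ℝ) : (2 * p + q * k) * (o2 * k ^ 2 + o1 * k + o0) =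
      (q * o2) * k ^ 3 + (2 * p * o2 + q * o1) * k ^ 2 + (2 * p * o1 + q * o0) * k
        + 2 * p * o0 := by ring
  have homega (d1 d2 k : ℝ) : omega0 d1 d2 k =
      (d1*d2^3 - 2*d1*d2^2 - d2^3 - 2*d1*d2 + d2^2)*k^2
        + (2*d1^2*d2^2 - 2*d1^2*d2 - 2*d1*d2^2 - 4*d1^2 + 4*d1*d2)*k
        + (d1^3*d2 - d1^2*d2 + 4*d1^2) := by
    unfold omega0
    ring
  rw [homega, homega, expand, expand]
  unfold beta2
  apply cubic_cross_le hx hxy <;> ring_nf <;> positivity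

/-- if moreover `d1 ≥ 4`, the function
`F(k) = d2(d2-1)²β₂(k)/(d1²(2d1+d2 k)ω₀(k))` is monotone increasing on `[0,1]`;
in particular `F(k) ≥ F(0) = d2(d2-1)²/(d1²(d1 d2 - d2 + 4))` for all `k ∈ [0,1]`. -/
theorem statement18 (d1 d2 : ℕ) (h1 : 2 ≤ d1) (h2 : d1 ≤ d2) (h4 : 4 ≤ d1) :
    (∀ k k' : ℝ, 0 ≤ k → k ≤ k' → k' ≤ 1 → Ffun d1 d2 k ≤ Ffun d1 d2 k') ∧
    (∀ k ∈ Set.Icc (0:ℝ) 1, Ffun d1 d2 0 ≤ Ffun d1 d2 k) ∧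
    Ffun d1 d2 0 = (d2:ℝ)*((d2:ℝ)-1)^2/((d1:ℝ)^2*((d1:ℝ)*(d2:ℝ) - (d2:ℝ) + 4)) := by
  obtain ⟨a, ha, hd1⟩ : ∃ a : ℝ, 0 ≤ a ∧ (d1 : ℝ) = 4 + a :=
    ⟨d1 - 4, sub_nonneg.2 (by exact_mod_cast h4), by ring⟩
  obtain ⟨b, hb, hd2⟩ : ∃ b : ℝ, 0 ≤ b ∧ (d2 : ℝ) = 4 + a + b :=
    ⟨d2 - d1, sub_nonneg.2 (by exact_mod_cast h2), by rw [← hd1]; ring⟩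
  have mono : ∀ k k' : ℝ, 0 ≤ k → k ≤ k' → k' ≤ 1 → Ffun d1 d2 k ≤ Ffun d1 d2 k' := by
    intro k k' hk hkk' _
    have hk' : 0 ≤ k' := hk.trans hkk'
    have o := omega0_pos_s18 ha hb hk
    have o' := omega0_pos_s18 ha hb hk'
    have hcross := cross_le ha hb hk hkk'
    rw [hd1, hd2]
    unfold Ffun
    rw [div_le_div_iff₀ (by positivity) (by positivity)]
    have hc : 0 ≤ (4 + a + b) * (4 + a + b - 1) ^ 2 * (4 + a) ^ 2 := by positivity
    linarith [mul_le_mul_of_nonneg_left hcross hc]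
  refine ⟨mono, fun k hk => mono 0 k le_rfl hk.1 hk.2, ?_⟩
  have hne : (d1 : ℝ) * d2 - d2 + 4 ≠ 0 := by
    have : 0 < (d1 : ℝ) * d2 - d2 + 4 := by
      rw [hd1, hd2]
      ring_nf
      positivity
    exact this.ne'
  have hd1ne : (d1 : ℝ) ≠ 0 := by
    rw [hd1]
    positivity
  -- At `k = 0` the quotient is `2 d1³ / (2 d1 · d1² (d1 d2 - d2 + 4))` times the constant.
  have hb0 : beta2 d1 d2 0 = 2 * (d1 : ℝ) ^ 3 := by
    unfold beta2
    ring
  have ho0 : omega0 d1 d2 0 = (d1 : ℝ) ^ 2 * (d1 * d2 - d2 + 4) := by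
    unfold omega0
    ring
  unfold Ffun
  rw [hb0, ho0, mul_zero, add_zero]
  field_simp
end
end
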